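/- Suppose max_i γ_i < 1/2. Then for each index i, the vertex e_i is an unstable fixed point of the (continuously extended) DeGroot-Friedkin map: there exists ε > 0 such that for every δ > 0 there exists an initial condition x(0) ∈ Δ̃_n with ‖x(0) − e_i‖₁ < δ whose trajectory x(s+1) = F(x(s)) satisfies ‖x(s) − e_i‖₁ > ε for some s ≥ 0. -/

import Mathlib

/-!
Near the vertex `e_i` the map expands the distance `t = 1 - x_i`. Writing `g = γ_i` and
`S = ∑_{j ≠ i} γ_j / (1 - x_j)`, one has `1 - F(x)_i = S t / (g + S t)`, which is increasing in `S`,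
and `S ≥ 1 - g` on the simplex. Hence `1 - F(x)_i ≥ (1 - g) t / (g + (1 - g) t)`
(`one_sub_DF_ge`). If `t ≤ ε := (1 - 2g) / (2 (1 - g))`, the denominator is at most `1/2`, so
the distance grows by the factor `2 (1 - g) > 1`. The interior of the simplex is invariant
(`DF_mem_intSimplex`), so a trajectory starting at the interior point `(1 - η) e_i + η γ` cannot
remain within `ε` of `e_i`: its distance would grow geometrically. Since `η` is arbitrarily small,
`e_i` is unstable.
-/


open Finset

/-- The DeGroot-Friedkin map: `F(x)_i = α(x) · γ_i/(1 - x_i)` with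
`α(x) = (∑_j γ_j/(1 - x_j))⁻¹`. -/
noncomputable def DF {n : ℕ} (γ : Fin n → ℝ) (x : Fin n → ℝ) : Fin n → ℝ :=
  fun i => (∑ j, γ j / (1 - x j))⁻¹ * (γ i / (1 - x i))

/-- The simplex Δₙ. -/
def simplex (n : ℕ) : Set (Fin n → ℝ) := {x | (∀ i, 0 ≤ x i) ∧ ∑ i, x i = 1}

/-- The interior int(Δₙ) of the simplex. -/
def intSimplex (n : ℕ) : Set (Fin n → ℝ) := {x | (∀ i, 0 < x i) ∧ ∑ i, x i = 1}

/-- The standard basis vector (vertex of the simplex) eᵢ. -/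
def vertex {n : ℕ} (i : Fin n) : Fin n → ℝ := fun j => if j = i then 1 else 0

/-- The punctured simplex Δ̃ₙ = Δₙ \ {e₁, …, eₙ}. -/
def punctSimplex (n : ℕ) : Set (Fin n → ℝ) := simplex n \ (⋃ i, {vertex i})

/-- The 1-norm ‖x‖₁ = ∑ i, |x i|. -/
noncomputable def norm1 {n : ℕ} (x : Fin n → ℝ) : ℝ := ∑ i, |x i|

lemma lt_one_of_mem_intSimplex {n : ℕ} (hn : 3 ≤ n) {x : Fin n → ℝ} (hx : x ∈ intSimplex n)
    (i : Fin n) : x i < 1 := by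
  have : Nontrivial (Fin n) := Fin.nontrivial_iff_two_le.mpr (by omega)
  obtain ⟨k, hk⟩ := exists_ne i
  rw [← hx.2]
  exact single_lt_sum hk (mem_univ _) (mem_univ _) (hx.1 k) (fun j _ _ => (hx.1 j).le)

lemma DF_mem_intSimplex {n : ℕ} (hn : 3 ≤ n) {γ : Fin n → ℝ} (hγpos : ∀ i, 0 < γ i)
    {x : Fin n → ℝ} (hx : x ∈ intSimplex n) : DF γ x ∈ intSimplex n := by
  have hpos : ∀ j, 0 < γ j / (1 - x j) := fun j =>
    div_pos (hγpos j) (sub_pos.mpr (lt_one_of_mem_intSimplex hn hx j))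
  have hS : 0 < ∑ j, γ j / (1 - x j) :=
    sum_pos (fun j _ => hpos j) ⟨⟨0, by omega⟩, mem_univ _⟩
  refine ⟨fun i => mul_pos (inv_pos.mpr hS) (hpos i), ?_⟩
  simp only [DF]
  rw [← mul_sum, inv_mul_cancel₀ hS.ne']

lemma one_sub_DF_ge {n : ℕ} (hn : 3 ≤ n) {γ : Fin n → ℝ} (hγpos : ∀ i, 0 < γ i)
    (hγsum : ∑ i, γ i = 1) (i : Fin n) (hγlt : γ i < 1) {x : Fin n → ℝ}
    (hx : x ∈ intSimplex n) :
    (1 - γ i) * (1 - x i) / (γ i + (1 - γ i) * (1 - x i)) ≤ 1 - DF γ x i := by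
  have ht : ∀ j, 0 < 1 - x j := fun j => sub_pos.mpr (lt_one_of_mem_intSimplex hn hx j)
  have hS : 1 - γ i ≤ ∑ j ∈ univ.erase i, γ j / (1 - x j) := by
    have h1 : 1 - γ i = ∑ j ∈ univ.erase i, γ j := by
      rw [← hγsum, ← add_sum_erase univ γ (mem_univ i)]; ring
    rw [h1]
    refine sum_le_sum fun j _ => ?_
    rw [le_div_iff₀ (ht j)]
    nlinarith [hγpos j, hx.1 j]
  have hD : DF γ x i = (γ i / (1 - x i) + ∑ j ∈ univ.erase i, γ j / (1 - x j))⁻¹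
      * (γ i / (1 - x i)) := by
    simp only [DF]
    rw [add_sum_erase univ (fun j => γ j / (1 - x j)) (mem_univ i)]
  rw [hD]
  set S := ∑ j ∈ univ.erase i, γ j / (1 - x j)
  have hti := ht i
  set t := 1 - x i
  have hg := hγpos i
  have hS0 : 0 < S := by linarith
  have hg1 : 0 < 1 - γ i := by linarith
  have hSt : 0 < S * t := mul_pos hS0 hti
  have hgt : 0 < (1 - γ i) * t := mul_pos hg1 hti
  have e : 1 - (γ i / t + S)⁻¹ * (γ i / t) = S * t / (γ i + S * t) := by
    have : γ i + S * t ≠ 0 := by positivity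
    have : γ i / t + S ≠ 0 := by positivity
    field_simp
    ring
  rw [e, div_le_div_iff₀ (by positivity) (by positivity)]
  have : (1 - γ i) * t ≤ S * t := mul_le_mul_of_nonneg_right hS hti.le
  nlinarith

/-- As long as a point `x` of the open simplex has `1 - x i ≤ (1 - 2g) / (2 (1 - g))`,
where `g = γ i`, one step of the map multiplies `1 - x i` by at least `2 (1 - g)`. -/
lemma DF_expand {n : ℕ} (hn : 3 ≤ n) {γ : Fin n → ℝ} (hγpos : ∀ i, 0 < γ i)
    (hγsum : ∑ i, γ i = 1) (i : Fin n) (hγhalf : γ i < 1 / 2) {x : Fin n → ℝ}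
    (hx : x ∈ intSimplex n) (hε : 1 - x i ≤ (1 - 2 * γ i) / (2 * (1 - γ i))) :
    2 * (1 - γ i) * (1 - x i) ≤ 1 - DF γ x i := by
  refine le_trans ?_ (one_sub_DF_ge hn hγpos hγsum i (by linarith) hx)
  have hg := hγpos i
  have hti : 0 < 1 - x i := sub_pos.mpr (lt_one_of_mem_intSimplex hn hx i)
  have hg1 : 0 < 1 - γ i := by linarith
  have hgt : 0 < (1 - γ i) * (1 - x i) := mul_pos hg1 hti
  rw [le_div_iff₀ (by linarith)] at hε
  rw [le_div_iff₀ (by linarith)]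
  nlinarith

/-- if max_i γ_i < 1/2, each vertex eᵢ is an unstable fixed point:
there is ε > 0 such that for every δ > 0 some x(0) ∈ Δ̃ₙ with ‖x(0) − eᵢ‖₁ < δ
has its trajectory x(s+1) = F(x(s)) satisfying ‖x(s) − eᵢ‖₁ > ε for some s. -/
theorem stmt8 {n : ℕ} (hn : 3 ≤ n) (γ : Fin n → ℝ)
    (hγpos : ∀ i, 0 < γ i) (hγsum : ∑ i, γ i = 1)
    (hγhalf : ∀ i, γ i < 1 / 2) :
    ∀ i : Fin n, ∃ ε > (0 : ℝ), ∀ δ > (0 : ℝ), ∃ x0 ∈ punctSimplex n,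
      norm1 (x0 - vertex i) < δ ∧
      ∃ s : ℕ, ε < norm1 ((DF γ)^[s] x0 - vertex i) := by
  intro i
  have hg := hγhalf i
  refine ⟨(1 - 2 * γ i) / (2 * (1 - γ i)), div_pos (by linarith) (by linarith), ?_⟩
  intro δ hδ
  obtain ⟨η, hη0, hη1, hηδ⟩ : ∃ η : ℝ, 0 < η ∧ η < 1 ∧ η * 2 < δ := by
    refine ⟨min (1 / 2) (δ / 4), by positivity, ?_, ?_⟩
    · linarith [min_le_left (1 / 2) (δ / 4)]
    · linarith [min_le_right (1 / 2) (δ / 4)]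
  have hv0 : ∀ j, 0 ≤ vertex i j := by
    intro j; unfold vertex; split_ifs <;> norm_num
  have hvsum : ∑ j, vertex i j = 1 := by simp [vertex]
  set x0 : Fin n → ℝ := fun j => (1 - η) * vertex i j + η * γ j with hx0
  have hint : x0 ∈ intSimplex n := by
    refine ⟨fun j => ?_, ?_⟩
    · have := mul_nonneg (sub_pos.mpr hη1).le (hv0 j)
      have := mul_pos hη0 (hγpos j)
      simp only [hx0]; linarith
    · simp only [hx0]
      rw [sum_add_distrib, ← mul_sum, ← mul_sum, hvsum, hγsum]; ring
  refine ⟨x0, ⟨⟨fun j => (hint.1 j).le, hint.2⟩, ?_⟩, ?_, ?_⟩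
  · simp only [Set.mem_iUnion, Set.mem_singleton_iff, not_exists]
    intro k hk
    have h1 := lt_one_of_mem_intSimplex hn hint k
    rw [hk] at h1
    simp [vertex] at h1
  · refine lt_of_le_of_lt ?_ hηδ
    calc norm1 (x0 - vertex i) ≤ ∑ j, η * (γ j + vertex i j) := by
          refine sum_le_sum fun j _ => ?_
          have h1 : (x0 - vertex i) j = η * (γ j - vertex i j) := by
            simp only [hx0, Pi.sub_apply]; ring
          rw [h1, abs_mul, abs_of_pos hη0]
          refine mul_le_mul_of_nonneg_left ?_ hη0.le
          rw [abs_le]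
          constructor <;> linarith [hv0 j, hγpos j]
      _ = η * 2 := by
          rw [← mul_sum, sum_add_distrib, hvsum, hγsum]; norm_num
  · by_contra! hcon
    have hmem : ∀ s, (DF γ)^[s] x0 ∈ intSimplex n := by
      intro s
      induction s with
      | zero => exact hint
      | succ s ih =>
        rw [Function.iterate_succ_apply']
        exact DF_mem_intSimplex hn hγpos ih
    have hclose : ∀ s, 1 - (DF γ)^[s] x0 i ≤ (1 - 2 * γ i) / (2 * (1 - γ i)) := by
      intro s
      refine le_trans ?_ (hcon s)
      have h1 : |((DF γ)^[s] x0 - vertex i) i| ≤ norm1 ((DF γ)^[s] x0 - vertex i) :=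
        single_le_sum (f := fun j => |((DF γ)^[s] x0 - vertex i) j|)
          (fun j _ => abs_nonneg _) (mem_univ i)
      refine le_trans ?_ h1
      have h2 : ((DF γ)^[s] x0 - vertex i) i = (DF γ)^[s] x0 i - 1 := by
        simp [vertex]
      rw [h2, abs_sub_comm]
      exact le_abs_self _
    have hgrow : ∀ s, (2 * (1 - γ i)) ^ s * (1 - x0 i) ≤ 1 - (DF γ)^[s] x0 i := by
      intro s
      induction s with
      | zero => simp
      | succ s ih =>
        rw [Function.iterate_succ_apply']
        refine le_trans ?_ (DF_expand hn hγpos hγsum i hg (hmem s) (hclose s))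
        rw [pow_succ', mul_assoc]
        exact mul_le_mul_of_nonneg_left ih (by linarith)
    have ht0 : 0 < 1 - x0 i := sub_pos.mpr (lt_one_of_mem_intSimplex hn hint i)
    obtain ⟨s, hs⟩ := pow_unbounded_of_one_lt (1 / (1 - x0 i))
      (show 1 < 2 * (1 - γ i) by linarith)
    rw [div_lt_iff₀ ht0] at hs
    have := hgrow s
    have := (hmem s).1 i
    linarith
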